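/- For every permutation w of {1,…,n} and every δ ∈ GPDs(w), each of the n pipes passes through at least one tile in which it turns from East-bound to North-bound (necessarily a bump tile, via its West-to-North strand, or a NW-elbow tile), and distinct pipes cannot share such a tile. Consequently δ has at least n turn tiles (bump, NW-elbow, or SE-elbow), so (A+B)^n divides wt(δ) in ℤ[x₁,…,xₙ,y₁,…,yₙ,A,B], and (A+B)^n divides the generic pipe dream polynomial G_w. -/

import Mathlib

open scoped Classical

namespace GPDpaper

/-- Raw data of a pipe-filling of the `n × n` grid: `d.1 i j` is the (optional) pipe label on
the vertical edge at row `i`, West of column `j` (so `d.1 i 0` is on the West boundary and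
`d.1 i (Fin.last n)` on the East boundary); `d.2 i j` is the label on the horizontal edge
North of row `i` in column `j` (so `d.2 0 j` is on the North boundary and
`d.2 (Fin.last n) j` on the South boundary).  Rows are numbered from the top. -/
abbrev Pipes (n : ℕ) :=
  (Fin n → Fin (n+1) → Option (Fin n)) × (Fin (n+1) → Fin n → Option (Fin n))

variable {n : ℕ}

/-- Label on the West edge of square `(i,j)`. -/
def We (d : Pipes n) (i j : Fin n) : Option (Fin n) := d.1 i j.castSucc
/-- Label on the East edge of square `(i,j)`. -/
def Ea (d : Pipes n) (i j : Fin n) : Option (Fin n) := d.1 i j.succ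
/-- Label on the North edge of square `(i,j)`. -/
def No (d : Pipes n) (i j : Fin n) : Option (Fin n) := d.2 i.castSucc j
/-- Label on the South edge of square `(i,j)`. -/
def So (d : Pipes n) (i j : Fin n) : Option (Fin n) := d.2 i.succ j

/-- The local condition making `d` a generic pipe dream: at each square, the pair of labels
leaving through the East and North edges is either `(W,S)` (cross/horizontal/vertical/blank
tile) or `(S,W)` (bump/elbow/blank tile); moreover two edges of the same square never carry
the same pipe label. -/
def IsValid (d : Pipes n) : Prop :=
  ∀ i j : Fin n,
    ((Ea d i j, No d i j) = (We d i j, So d i j) ∨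
     (Ea d i j, No d i j) = (So d i j, We d i j)) ∧
    (We d i j = So d i j → We d i j = none)

/-- The seven generic pipe dream tiles. -/
inductive Tile where
  | cross | bump | nw | se | horiz | vert | blank
deriving DecidableEq

/-- The tile of a pipe-filling at square `(i,j)`. -/
def tile (d : Pipes n) (i j : Fin n) : Tile :=
  match We d i j, So d i j with
  | some a, some _ => if Ea d i j = some a then .cross else .bump
  | some _, none => if No d i j = none then .horiz else .nw
  | none, some _ => if No d i j = none then .se else .vert
  | none, none => .blank

/-- `d` is a generic pipe dream for the permutation `w`: it is locally valid, the pipe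
entering the West boundary in row `i` is labelled `i`, no pipes meet the East and South
boundaries, and the pipe exiting the North boundary in column `j` is labelled `w⁻¹(j)`. -/
def IsGPDof (w : Equiv.Perm (Fin n)) (d : Pipes n) : Prop :=
  IsValid d ∧
  (∀ i : Fin n, d.1 i 0 = some i) ∧
  (∀ i : Fin n, d.1 i (Fin.last n) = none) ∧
  (∀ j : Fin n, d.2 (Fin.last n) j = none) ∧
  (∀ j : Fin n, d.2 0 j = some (w.symm j))

/-- Number of tiles of `d` of a given type. -/
noncomputable def tileCount (d : Pipes n) (t : Tile) : ℕ :=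
  (Finset.univ.filter (fun p : Fin n × Fin n => tile d p.1 p.2 = t)).card

/-- The pipes labelled `p` and `q` cross at the tile `(i,j)`. -/
def CrossesAt (d : Pipes n) (p q : Fin n) (i j : Fin n) : Prop :=
  tile d i j = .cross ∧
  ((We d i j = some p ∧ So d i j = some q) ∨ (We d i j = some q ∧ So d i j = some p))

/-- The number of tiles at which the pipes labelled `p` and `q` cross. -/
noncomputable def crossCount (d : Pipes n) (p q : Fin n) : ℕ :=
  (Finset.univ.filter (fun ij : Fin n × Fin n => CrossesAt d p q ij.1 ij.2)).card

/-- No two pipes of `d` cross each other at more than one tile. -/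
def NoDoubleCross (d : Pipes n) : Prop := ∀ p q : Fin n, crossCount d p q ≤ 1

/-- Number of inversions (Coxeter length) of a permutation. -/
def invCount (w : Equiv.Perm (Fin n)) : ℕ :=
  (Finset.univ.filter (fun p : Fin n × Fin n => p.1 < p.2 ∧ w p.2 < w p.1)).card

/-- Classic pipe dream (in 1-indexed terms: crosses and bumps for `i+j ≤ n`, NW-elbows on the
antidiagonal `i+j = n+1`, blanks below, and no two pipes crossing twice). -/
def IsClassic (d : Pipes n) : Prop :=
  (∀ i j : Fin n, (i : ℕ) + (j : ℕ) + 2 ≤ n → tile d i j = .cross ∨ tile d i j = .bump) ∧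
  (∀ i j : Fin n, (i : ℕ) + (j : ℕ) + 2 = n + 1 → tile d i j = .nw) ∧
  (∀ i j : Fin n, (i : ℕ) + (j : ℕ) + 2 > n + 1 → tile d i j = .blank) ∧
  NoDoubleCross d

/-- Bumpless-reduced: no bump tiles and no two pipes crossing twice. -/
def IsBumplessReduced (d : Pipes n) : Prop :=
  (∀ i j : Fin n, tile d i j ≠ .bump) ∧ NoDoubleCross d

end GPDpaper

namespace GPDpaper

/-- Variables `x₁,…,xₙ, y₁,…,yₙ, A, B`. -/
inductive Var (n : ℕ) where
  | x (i : Fin n) | y (j : Fin n) | A | B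

variable {n : ℕ}

/-- The weight of a generic pipe dream, in `ℤ[x₁,…,xₙ,y₁,…,yₙ,A,B]`. -/
noncomputable def wt (d : Pipes n) : MvPolynomial (Var n) ℤ :=
  ∏ i : Fin n, ∏ j : Fin n,
    match tile d i j with
    | .cross | .horiz | .vert =>
        MvPolynomial.X Var.A + MvPolynomial.X (Var.x i) - MvPolynomial.X (Var.y j)
    | .blank =>
        MvPolynomial.X Var.B - MvPolynomial.X (Var.x i) + MvPolynomial.X (Var.y j)
    | _ => MvPolynomial.X Var.A + MvPolynomial.X Var.B

/-- The generic pipe dream polynomial `G_w`. -/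
noncomputable def G (w : Equiv.Perm (Fin n)) : MvPolynomial (Var n) ℤ :=
  ∑ d ∈ Finset.univ.filter (fun d : Pipes n => IsGPDof w d), wt d

theorem row_turn {w : Equiv.Perm (Fin n)} {d : Pipes n} (hd : IsGPDof w d) (p : Fin n) :
    ∃ j : Fin n, We d p j = some p ∧ No d p j = some p := by
  obtain ⟨hv, hW, hE, -, -⟩ := hd
  by_contra hcon
  have key : ∀ k : Fin (n+1), d.1 p k = some p := by
    intro k
    induction k using Fin.induction with
    | zero => exact hW p
    | succ j ih =>
      by_contra hne
      apply hcon
      refine ⟨j, ih, ?_⟩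
      rcases (hv p j).1 with h | h
      · have h1 := congrArg Prod.fst h
        exact absurd (h1.trans ih) hne
      · have h1 := congrArg Prod.snd h
        exact h1.trans ih
  have := key (Fin.last n)
  rw [hE p] at this
  cases this

theorem turn_tile {d : Pipes n} (hv : IsValid d) {p i j : Fin n}
    (h1 : We d i j = some p) (h2 : No d i j = some p) :
    tile d i j = .bump ∨ tile d i j = .nw := by
  obtain ⟨h, h'⟩ := hv i j
  rw [h1, h2] at h
  rw [h1] at h'
  unfold tile
  rw [h1, h2]
  cases hS : So d i j with
  | none => simp
  | some b =>
    rw [hS] at h h'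
    left
    have hb : some p ≠ some b := fun e => by simpa using h' e
    rcases h with h | h
    · exact absurd (congrArg Prod.snd h) hb
    · have h3 : Ea d i j = some b := congrArg Prod.fst h
      rw [h3]
      simp [hb.symm]

theorem wt_dvd {w : Equiv.Perm (Fin n)} {d : Pipes n} (hd : IsGPDof w d) :
    (MvPolynomial.X Var.A + MvPolynomial.X Var.B : MvPolynomial (Var n) ℤ) ^ n ∣ wt d := by
  have h0 : (MvPolynomial.X Var.A + MvPolynomial.X Var.B : MvPolynomial (Var n) ℤ) ^ n
      = ∏ _i : Fin n, (MvPolynomial.X Var.A + MvPolynomial.X Var.B) := by simp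
  rw [h0]
  unfold wt
  apply Finset.prod_dvd_prod_of_dvd
  intro i _
  obtain ⟨j, h1, h2⟩ := row_turn hd i
  refine Dvd.dvd.trans ?_ (Finset.dvd_prod_of_mem _ (Finset.mem_univ j))
  rcases turn_tile hd.1 h1 h2 with h | h <;> simp [h]

theorem count_le {w : Equiv.Perm (Fin n)} {d : Pipes n} (hd : IsGPDof w d) :
    n ≤ tileCount d .bump + tileCount d .nw := by
  choose f h1 h2 using row_turn hd
  unfold tileCount
  refine le_trans ?_ (Finset.card_union_le _ _)
  have hinj : Function.Injective (fun p : Fin n => (p, f p)) :=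
    fun a b h => congrArg Prod.fst h
  calc n = (Finset.univ.image (fun p : Fin n => (p, f p))).card := by
        rw [Finset.card_image_of_injective _ hinj]; simp
    _ ≤ _ := by
        apply Finset.card_le_card
        intro x hx
        obtain ⟨p, -, rfl⟩ := Finset.mem_image.1 hx
        simpa using turn_tile hd.1 (h1 p) (h2 p)

theorem statement8 {n : ℕ} (hn : 1 ≤ n) (w : Equiv.Perm (Fin n)) (d : Pipes n)
    (hd : IsGPDof w d) :
    (∀ p : Fin n, ∃ i j : Fin n, We d i j = some p ∧ No d i j = some p) ∧
    (∀ p q : Fin n, ∀ i j : Fin n,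
      (We d i j = some p ∧ No d i j = some p) →
      (We d i j = some q ∧ No d i j = some q) → p = q) ∧
    n ≤ tileCount d .bump + tileCount d .nw + tileCount d .se ∧
    (MvPolynomial.X Var.A + MvPolynomial.X Var.B : MvPolynomial (Var n) ℤ) ^ n ∣ wt d ∧
    (MvPolynomial.X Var.A + MvPolynomial.X Var.B : MvPolynomial (Var n) ℤ) ^ n ∣ G w := by
  refine ⟨fun p => ⟨p, row_turn hd p⟩, ?_, (count_le hd).trans (Nat.le_add_right _ _),
    wt_dvd hd, ?_⟩
  · rintro p q i j ⟨h1, -⟩ ⟨h2, -⟩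
    exact Option.some.inj (h1.symm.trans h2)
  · unfold G
    apply Finset.dvd_sum
    intro e he
    exact wt_dvd (Finset.mem_filter.1 he).2

end GPDpaper
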